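/- arXiv:2312.15381 — 3 statements merged into one kernel-verified Lean document; each statement's English description precedes it below -/
import Mathlib

section
/- The defined parthood relation P is transitive: for all individuals x, y, z, if P x y and P y z then P x z. -/
/-- Components of `zz`: all objects that are one of some plurality fusing to a member of `zz`. -/
def Ucomp {α : Type*} (F : Set α → α → Prop) (zz : Set α) : Set α :=
  {u | ∃ z ∈ zz, ∃ yy, F yy z ∧ u ∈ yy}

/-- Parthood defined from fusion: `x` is part of `y` iff `y` fuses some plurality containing `x`. -/
def PartF {α : Type*} (F : Set α → α → Prop) (x y : α) : Prop :=
  ∃ zz, F zz y ∧ x ∈ zz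

/-- Overlap defined from the fusion-induced parthood. -/
def OvF {α : Type*} (F : Set α → α → Prop) (x y : α) : Prop :=
  ∃ z, PartF F z x ∧ PartF F z y

/-!
Every `y` is a fusion of `{y}`, since some fusion of `{y}` exists and can only be `y`. If `x` is
one of `xx`, which fuse to `y`, and `y` is one of `yy`, which fuse to `z`, then `yy = yy ∪ {y}`,
and extensionality allows replacing `{y}` by `xx`: `yy ∪ xx` also fuse to `z`.
-/

section Fusion

variable {α : Type*} {F : Set α → α → Prop} {x y z : α}

theorem fusion_singleton_self (exF : ∃ y, F {x} y) (idF : ∀ y, F {x} y → y = x) : F {x} x := by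
  obtain ⟨y, hy⟩ := exF
  exact idF y hy ▸ hy

theorem fusion_union_of_mem {xx yy : Set α}
    (extF : ∀ (zz yy uu : Set α) (x v : α),
      F zz x → F yy x → F (uu ∪ zz) v → F (uu ∪ yy) v)
    (selfF : F {y} y) (hxx : F xx y) (hyy : F yy z) (hy : y ∈ yy) : F (yy ∪ xx) z := by
  have absorb : yy ∪ {y} = yy :=
    Set.union_eq_self_of_subset_right (Set.singleton_subset_iff.mpr hy)
  exact extF {y} xx yy y z selfF hxx (absorb.symm ▸ hyy)

theorem part_trans_general
    (selfF : ∀ x, F {x} x)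
    (extF : ∀ (zz yy uu : Set α) (x v : α),
      F zz x → F yy x → F (uu ∪ zz) v → F (uu ∪ yy) v)
    (hxy : PartF F x y) (hyz : PartF F y z) : PartF F x z := by
  obtain ⟨xx, hxx, hx⟩ := hxy
  obtain ⟨yy, hyy, hy⟩ := hyz
  exact ⟨yy ∪ xx, fusion_union_of_mem extF (selfF y) hxx hyy hy, Set.mem_union_right yy hx⟩

end Fusion

theorem part_trans {α : Type*} (F : Set α → α → Prop)
    (exF : ∀ zz : Set α, zz.Nonempty → ∃ y, F zz y)
    (extF : ∀ (zz yy uu : Set α) (x v : α),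
      F zz x → F yy x → F (uu ∪ zz) v → F (uu ∪ yy) v)
    (idF : ∀ x y : α, F {y} x → x = y)
    (compF : ∀ (zz : Set α) (x y : α), F (zz ∪ {x}) y → F zz y →
      ∃ vv, vv ⊆ Ucomp F zz ∧ F vv x ∧ vv.Nonempty)
    (wspF : ∀ x y : α, F ({x} ∪ {y}) y → x ≠ y →
      ∃ z ∈ Ucomp F {y}, ¬ ∃ u, F (Ucomp F {x} ∩ Ucomp F {z}) u) :
    ∀ x y z : α, PartF F x y → PartF F y z → PartF F x z := by
  have selfF (x : α) : F {x} x :=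
    fusion_singleton_self (exF {x} (Set.singleton_nonempty x)) (idF · x)
  exact fun _ _ _ => part_trans_general selfF extF
end

section
/- In classical mereology, fusion coincides with minimal upper bound: F zz x if and only if zz is nonempty, every y in zz satisfies P y x, and for every y such that all v in zz satisfy P v y one has P x y. -/
/-- Overlap: `x` and `y` share a common part. -/
def OvP {α : Type*} (P : α → α → Prop) (x y : α) : Prop :=
  ∃ z, P z x ∧ P z y

/-- Proper parthood. -/
def PPP {α : Type*} (P : α → α → Prop) (x y : α) : Prop :=
  P x y ∧ x ≠ y

/-- Leśniewski fusion: `x` fuses `zz` iff every member of `zz` is part of `x`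
and every part of `x` overlaps some member of `zz`. -/
def FusL {α : Type*} (P : α → α → Prop) (zz : Set α) (x : α) : Prop :=
  (∀ y ∈ zz, P y x) ∧ ∀ y, P y x → ∃ v ∈ zz, OvP P v y

/-- Components of `zz`: everything that is part of some member of `zz`. -/
def UP {α : Type*} (P : α → α → Prop) (zz : Set α) : Set α :=
  {u | ∃ w ∈ zz, P u w}

/-!
Suppose every part of `x` overlaps `y`. Then adding `x` to `{y}` gives nothing new to overlap, so
a fusion of `{x, y}` also fuses `{y}`. Since `y` fuses `{y}`, uniqueness makes it the fusion of
`{x, y}`, whence `x` is part of `y`: this is strong supplementation. Every part of a fusion of `zz`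
overlaps a member of `zz`, hence every upper bound of `zz`, and strong supplementation makes the
fusion the least upper bound. Conversely, a least upper bound of a nonempty `zz` is equivalent to
the fusion of `zz`, and whatever is equivalent to a fusion is itself a fusion.
-/

/-- Strong supplementation, the axiom of extensional mereology, in contrapositive form: usually it
says that if `x` is not part of `y`, then some part of `x` does not overlap `y`. -/
def StrongSupplementation {α : Type*} (P : α → α → Prop) : Prop :=
  ∀ ⦃x y⦄, (∀ w, P w x → OvP P w y) → P x y

theorem OvP.symm {α : Type*} {P : α → α → Prop} {x y : α} : OvP P x y → OvP P y x :=
  fun ⟨z, hzx, hzy⟩ => ⟨z, hzy, hzx⟩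

section Preorder

variable {α : Type*} [Preorder α] {s : Set α} {x y z : α}

theorem OvP.mono {x' y' : α} (hx : x ≤ x') (hy : y ≤ y') :
    OvP (· ≤ ·) x y → OvP (· ≤ ·) x' y' :=
  fun ⟨z, hzx, hzy⟩ => ⟨z, hzx.trans hx, hzy.trans hy⟩

theorem ovP_of_le (h : x ≤ y) : OvP (· ≤ ·) y x :=
  ⟨x, h, le_rfl⟩

theorem fusL_singleton (x : α) : FusL (· ≤ ·) {x} x :=
  ⟨fun _ hy => hy.le, fun _ hy => ⟨x, rfl, ovP_of_le hy⟩⟩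

theorem FusL.nonempty (hx : FusL (· ≤ ·) s x) : s.Nonempty :=
  let ⟨v, hv, _⟩ := hx.2 x le_rfl
  ⟨v, hv⟩

theorem FusL.of_antisymmRel (hx : FusL (· ≤ ·) s x) (hxy : AntisymmRel (· ≤ ·) x y) :
    FusL (· ≤ ·) s y :=
  ⟨fun v hv => (hx.1 v hv).trans hxy.le, fun w hw => hx.2 w (hw.trans hxy.ge)⟩

theorem FusL.of_insert (hx : ∀ w ≤ x, ∃ v ∈ s, OvP (· ≤ ·) v w)
    (hz : FusL (· ≤ ·) (insert x s) z) : FusL (· ≤ ·) s z := by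
  refine ⟨fun v hv => hz.1 v (Set.mem_insert_of_mem x hv), fun w hw => ?_⟩
  obtain ⟨v, rfl | hv, hvw⟩ := hz.2 w hw
  · obtain ⟨u, huv, huw⟩ := hvw
    obtain ⟨v', hv', hv'u⟩ := hx u huv
    exact ⟨v', hv', hv'u.mono le_rfl huw⟩
  · exact ⟨v, hv, hvw⟩

theorem strongSupplementation_of_fusL (hpair : ∀ x y : α, ∃ z, FusL (· ≤ ·) {x, y} z)
    (hsingleton : ∀ y z : α, FusL (· ≤ ·) {y} z → z ≤ y) :
    StrongSupplementation (α := α) (· ≤ ·) := by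
  intro x y hxy
  obtain ⟨z, hz⟩ := hpair x y
  have hzy : FusL (· ≤ ·) {y} z := hz.of_insert fun w hw => ⟨y, rfl, (hxy w hw).symm⟩
  calc
    x ≤ z := hz.1 x (Set.mem_insert x {y})
    _ ≤ y := hsingleton y z hzy

theorem FusL.isLUB (hsupp : StrongSupplementation (α := α) (· ≤ ·))
    (hx : FusL (· ≤ ·) s x) : IsLUB s x := by
  refine ⟨hx.1, fun y hy => hsupp fun w hw => ?_⟩
  obtain ⟨v, hv, hvw⟩ := hx.2 w hw
  exact (hvw.mono (hy hv) le_rfl).symm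

theorem fusion_eq_mub_general (hsupp : StrongSupplementation (α := α) (· ≤ ·))
    (hex : s.Nonempty → ∃ z, FusL (· ≤ ·) s z) :
    FusL (· ≤ ·) s x ↔ s.Nonempty ∧ IsLUB s x := by
  refine ⟨fun hx => ⟨hx.nonempty, hx.isLUB hsupp⟩, fun ⟨hs, hx⟩ => ?_⟩
  obtain ⟨z, hz⟩ := hex hs
  have hzlub : IsLUB s z := hz.isLUB hsupp
  exact hz.of_antisymmRel ⟨hzlub.2 hx.1, hx.2 hzlub.1⟩

end Preorder

theorem fusion_eq_mub {α : Type*} (P : α → α → Prop)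
    (hrefl : ∀ x : α, P x x)
    (hanti : ∀ x y : α, P x y → P y x → x = y)
    (htrans : ∀ x y z : α, P x y → P y z → P x z)
    (hex : ∀ zz : Set α, zz.Nonempty → ∃ x, FusL P zz x)
    (huniq : ∀ (zz : Set α) (x y : α), FusL P zz x → FusL P zz y → x = y) :
    ∀ (zz : Set α) (x : α), FusL P zz x ↔
      zz.Nonempty ∧ (∀ y ∈ zz, P y x) ∧ ∀ y, (∀ v ∈ zz, P v y) → P x y := by
  let _ : Preorder α := { le := P, le_refl := hrefl, le_trans := htrans }
  have hsupp : StrongSupplementation P :=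
    strongSupplementation_of_fusL (fun x y => hex {x, y} (Set.insert_nonempty x {y}))
      fun y z hz => (huniq {y} z y hz (fusL_singleton y)).le
  exact fun zz x => fusion_eq_mub_general hsupp (hex zz)
end

section
/- In classical mereology, the fusion form of weak supplementation holds: if F ({x} ∪ {y}) y and x ≠ y, then there exists z ∈ U {y} such that there is no u with F (U {x} ∩ U {z}) u, where U zz = {u | ∃ w ∈ zz, P u w}. -/
/-!
If every part of `y` overlapped a proper part `x` of it, then `y` would fuse `{x}`; as `x` does so
too, uniqueness would give `x = y`. Hence some part `z` of `y` is disjoint from `x`, which means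
that `U {x} ∩ U {z}` is empty. The empty plurality has no fusion, since a fusion is part of itself
and hence overlaps a member of what it fuses.
-/

section

variable {α : Type*} {P : α → α → Prop}

theorem mem_up_singleton {x u : α} : u ∈ UP P {x} ↔ P u x := by
  simp only [UP, Set.mem_ofPred_eq, Set.mem_singleton_iff, exists_eq_left]

theorem up_singleton_inter_nonempty_iff {x z : α} :
    (UP P {x} ∩ UP P {z}).Nonempty ↔ OvP P x z := by
  simp only [Set.Nonempty, Set.mem_inter_iff, mem_up_singleton, OvP]

theorem fusL_singleton_iff {x y : α} :
    FusL P {x} y ↔ P x y ∧ ∀ z, P z y → OvP P x z := by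
  simp only [FusL, Set.mem_singleton_iff, forall_eq, exists_eq_left]

theorem fusL_singleton_self (hrefl : ∀ x : α, P x x) (x : α) : FusL P {x} x :=
  fusL_singleton_iff.2 ⟨hrefl x, fun z hzx => ⟨z, hzx, hrefl z⟩⟩

theorem FusL.nonempty_of_part {zz : Set α} {u v : α} (hu : FusL P zz u) (hvu : P v u) :
    zz.Nonempty :=
  (hu.2 v hvu).imp fun _ hw => hw.1

theorem exists_part_not_ovP (hrefl : ∀ x : α, P x x)
    (huniq : ∀ a x y : α, FusL P {a} x → FusL P {a} y → x = y)
    {x y : α} (hxy : P x y) (hne : x ≠ y) : ∃ z, P z y ∧ ¬ OvP P x z := by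
  by_contra! hov
  exact hne (huniq x x y (fusL_singleton_self hrefl x) (fusL_singleton_iff.2 ⟨hxy, hov⟩))

theorem fusion_wsp_general (hrefl : ∀ x : α, P x x)
    (huniq : ∀ a x y : α, FusL P {a} x → FusL P {a} y → x = y) :
    ∀ x y : α, FusL P ({x} ∪ {y}) y → x ≠ y →
      ∃ z ∈ UP P {y}, ¬ ∃ u, FusL P (UP P {x} ∩ UP P {z}) u := by
  intro x y hy hne
  have hxy : P x y := hy.1 x (Or.inl rfl)
  obtain ⟨z, hzy, hdisj⟩ := exists_part_not_ovP hrefl huniq hxy hne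
  refine ⟨z, mem_up_singleton.2 hzy, ?_⟩
  rintro ⟨u, hu⟩
  exact hdisj (up_singleton_inter_nonempty_iff.1 (hu.nonempty_of_part (hrefl u)))

end

theorem fusion_wsp {α : Type*} (P : α → α → Prop)
    (hrefl : ∀ x : α, P x x)
    (hanti : ∀ x y : α, P x y → P y x → x = y)
    (htrans : ∀ x y z : α, P x y → P y z → P x z)
    (hex : ∀ zz : Set α, zz.Nonempty → ∃ x, FusL P zz x)
    (huniq : ∀ (zz : Set α) (x y : α), FusL P zz x → FusL P zz y → x = y) :
    ∀ x y : α, FusL P ({x} ∪ {y}) y → x ≠ y →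
      ∃ z ∈ UP P {y}, ¬ ∃ u, FusL P (UP P {x} ∩ UP P {z}) u :=
  fusion_wsp_general hrefl fun a => huniq {a}
end
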